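/- arXiv:1708.01451 — 2 statements merged into one kernel-verified Lean document; each statement's English description precedes it below -/
import Mathlib

section
/- For every positive integer m, the complex number (3 + 4i)^m is not real, i.e. its imaginary part is nonzero. -/
/-- Modulo 5, `(3 + 4i)^2 = 3 + 4i`, so all positive powers are `3 + 4i` modulo 5. -/
lemma pow_aux (n : ℕ) : ∃ a b : ℤ,
    (3 + 4 * Complex.I) ^ (n + 1) = ((5 * a + 3 : ℤ) : ℂ) + ((5 * b + 4 : ℤ) : ℂ) * Complex.I := by
  induction n with
  | zero => exact ⟨0, 0, by push_cast; ring⟩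
  | succ k ih =>
    obtain ⟨a, b, h⟩ := ih
    refine ⟨3 * a - 4 * b - 2, 4 * a + 3 * b + 4, ?_⟩
    rw [pow_succ, h]
    push_cast
    linear_combination (4 * (5 * (b : ℂ) + 4)) * Complex.I_sq

/-- For every positive integer `m`, the complex number `(3 + 4i)^m`
is not real: its imaginary part is nonzero. -/
theorem pow_three_add_four_I_not_real (m : ℕ) (hm : 0 < m) :
    ((3 + 4 * Complex.I) ^ m).im ≠ 0 := by
  obtain ⟨n, rfl⟩ : ∃ n, m = n + 1 := ⟨m - 1, by omega⟩
  obtain ⟨a, b, h⟩ := pow_aux n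
  rw [h]
  intro h0
  rw [Complex.add_im, Complex.intCast_im, Complex.mul_I_im, Complex.intCast_re, zero_add] at h0
  have h1 : 5 * b + 4 = 0 := by exact_mod_cast h0
  omega
end

section
/- Let n ≥ 1 and 1 ≤ k ≤ n be integers, let K ≥ 1, let E be the n-dimensional Euclidean space ℝⁿ, and let T : E → E be an invertible linear map satisfying ‖T‖ⁿ ≤ K·det T, where ‖T‖ is the operator norm. Then for every continuous alternating k-linear form ω on E, (det T)·‖ω‖^{n/k} ≤ K^{n−1}·‖ω ∘ T‖^{n/k}, where ω ∘ T denotes the alternating k-form (v₁, …, v_k) ↦ ω(T v₁, …, T v_k) and ‖·‖ on alternating k-forms is the operator norm ‖ω‖ = sup{|ω(v₁,…,v_k)| : ‖v₁‖, …, ‖v_k‖ ≤ 1}. -/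
open Set

/-- The operator norm of an alternating `k`-linear form on `ℝⁿ`:
`‖ω‖ = sup { |ω(v₁,…,v_k)| : ‖v₁‖,…,‖v_k‖ ≤ 1 }`. -/
noncomputable def altFormNorm {n k : ℕ}
    (ω : (EuclideanSpace ℝ (Fin n)) [⋀^Fin k]→ₗ[ℝ] ℝ) : ℝ :=
  sSup ((fun v : Fin k → EuclideanSpace ℝ (Fin n) => |ω v|) ''
    {v | ∀ i, ‖v i‖ ≤ 1})

theorem abs_det_le_aux (n : ℕ) (hn : 1 ≤ n)
    (T : EuclideanSpace ℝ (Fin n) →L[ℝ] EuclideanSpace ℝ (Fin n))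
    (u : EuclideanSpace ℝ (Fin n)) (hu : ‖u‖ = 1) :
    |LinearMap.det (T : EuclideanSpace ℝ (Fin n) →ₗ[ℝ] EuclideanSpace ℝ (Fin n))| ≤
      ‖T u‖ * ‖T‖ ^ (n - 1) := by
  obtain ⟨m, rfl⟩ : ∃ m, n = m + 1 := ⟨n - 1, by omega⟩
  have ho : Orthonormal ℝ (({0} : Set (Fin (m + 1))).domRestrict
      (fun _ : Fin (m + 1) => u)) := by
    refine ⟨fun i => hu, fun i j hij => ?_⟩
    exact absurd (Subsingleton.elim i j) hij
  obtain ⟨b, hb⟩ := ho.exists_orthonormalBasis_extension_of_card_eq (by simp)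
  have hb0 : b 0 = u := hb 0 rfl
  have : Fact (Module.finrank ℝ (EuclideanSpace ℝ (Fin (m + 1))) = m + 1) := ⟨by simp⟩
  have h1 := (b.toBasis.orientation).abs_volumeForm_apply_le (fun i => T (b i))
  rw [(b.toBasis.orientation).volumeForm_robust b rfl] at h1
  have h2 := b.toBasis.det_comp
    (T : EuclideanSpace ℝ (Fin (m + 1)) →ₗ[ℝ] EuclideanSpace ℝ (Fin (m + 1))) b.toBasis
  rw [Module.Basis.det_self, mul_one] at h2
  have h3 : ((T : EuclideanSpace ℝ (Fin (m + 1)) →ₗ[ℝ] EuclideanSpace ℝ (Fin (m + 1))) ∘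
      b.toBasis) = fun i => T (b i) := by
    funext i; simp
  rw [h3] at h2
  rw [h2, Fin.prod_univ_succ, hb0] at h1
  refine h1.trans (mul_le_mul_of_nonneg_left ?_ (norm_nonneg _))
  calc ∏ i : Fin m, ‖T (b i.succ)‖ ≤ ∏ _i : Fin m, ‖T‖ := by
        refine Finset.prod_le_prod (fun _ _ => norm_nonneg _) (fun i _ => ?_)
        have := T.le_opNorm (b i.succ)
        simpa using this
    _ = ‖T‖ ^ (m + 1 - 1) := by simp

theorem altForm_bdd_aux {n k : ℕ} (ω : (EuclideanSpace ℝ (Fin n)) [⋀^Fin k]→ₗ[ℝ] ℝ) :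
    BddAbove ((fun v : Fin k → EuclideanSpace ℝ (Fin n) => |ω v|) ''
      {v | ∀ i, ‖v i‖ ≤ 1}) := by
  have hc : Continuous (fun v : Fin k → EuclideanSpace ℝ (Fin n) => ω v) := by
    have hx : (fun v : Fin k → EuclideanSpace ℝ (Fin n) => ω v) = fun v =>
        ∑ r : Fin k → Fin n, (∏ i, v i (r i)) •
          ω (fun i => EuclideanSpace.basisFun (Fin n) ℝ (r i)) := by
      funext v
      have h1 : v = fun i => ∑ j, v i j • EuclideanSpace.basisFun (Fin n) ℝ j := by
        funext i
        simpa using ((EuclideanSpace.basisFun (Fin n) ℝ).sum_repr (v i)).symm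
      have h2 := ω.toMultilinearMap.map_sum
        (fun i j => v i j • EuclideanSpace.basisFun (Fin n) ℝ j)
      rw [← h1] at h2
      refine h2.trans (Finset.sum_congr rfl fun r _ => ?_)
      exact ω.toMultilinearMap.map_smul_univ (fun i => v i (r i))
        (fun i => EuclideanSpace.basisFun (Fin n) ℝ (r i))
    rw [hx]
    fun_prop
  have hs : IsCompact {v : Fin k → EuclideanSpace ℝ (Fin n) | ∀ i, ‖v i‖ ≤ 1} := by
    have := isCompact_univ_pi
      (fun _ : Fin k => isCompact_closedBall (0 : EuclideanSpace ℝ (Fin n)) 1)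
    convert this using 1
    ext v; simp
  exact (hs.image hc.abs).bddAbove

theorem altFormNorm_nonneg_aux {n k : ℕ} (ω : (EuclideanSpace ℝ (Fin n)) [⋀^Fin k]→ₗ[ℝ] ℝ) :
    0 ≤ altFormNorm ω :=
  Real.sSup_nonneg (by rintro _ ⟨v, _, rfl⟩; exact abs_nonneg _)

theorem altFormNorm_comp_aux {n k : ℕ} (c : ℝ) (hc : 0 < c)
    (T : EuclideanSpace ℝ (Fin n) →L[ℝ] EuclideanSpace ℝ (Fin n))
    (hTinv : Function.Bijective T) (hcT : ∀ u, c * ‖u‖ ≤ ‖T u‖)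
    (ω : (EuclideanSpace ℝ (Fin n)) [⋀^Fin k]→ₗ[ℝ] ℝ) :
    c ^ k * altFormNorm ω ≤ altFormNorm (ω.compLinearMap
        (T : EuclideanSpace ℝ (Fin n) →ₗ[ℝ] EuclideanSpace ℝ (Fin n))) := by
  rw [mul_comm, ← le_div_iff₀ (pow_pos hc k)]
  refine csSup_le ⟨_, 0, by simp, rfl⟩ ?_
  rintro _ ⟨v, hv, rfl⟩
  rw [le_div_iff₀ (pow_pos hc k)]
  choose w hw using fun i => hTinv.2 (v i)
  refine le_csSup (altForm_bdd_aux _) ⟨fun i => c • w i, fun i => ?_, ?_⟩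
  · have h1 := hcT (w i)
    rw [hw] at h1
    rw [norm_smul, Real.norm_of_nonneg hc.le]
    exact h1.trans (hv i)
  · have h : ω (fun i => c • v i) = c ^ k * ω v := by
      have := ω.toMultilinearMap.map_smul_univ (fun _ => c) v
      simpa using this
    have h2 : (ω.compLinearMap
        (T : EuclideanSpace ℝ (Fin n) →ₗ[ℝ] EuclideanSpace ℝ (Fin n))) (fun i => c • w i)
        = ω (fun i => c • v i) := by
      rw [AlternatingMap.compLinearMap_apply]
      congr 1
      funext i
      simp [hw]
    simp only [h2, h, abs_mul, abs_of_pos (pow_pos hc k)]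
    ring

/-- If an invertible linear map `T` on `ℝⁿ` satisfies `‖T‖ⁿ ≤ K · det T`,
then every alternating `k`-form `ω` satisfies
`(det T) · ‖ω‖^{n/k} ≤ K^{n-1} · ‖ω ∘ T‖^{n/k}`. -/
theorem pullback_alternating_form_lower_bound
    (n k : ℕ) (hn : 1 ≤ n) (hk : 1 ≤ k) (hkn : k ≤ n) (K : ℝ) (hK : 1 ≤ K)
    (T : EuclideanSpace ℝ (Fin n) →L[ℝ] EuclideanSpace ℝ (Fin n))
    (hTinv : Function.Bijective T)
    (hT : ‖T‖ ^ n ≤ K * LinearMap.det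
      (T : EuclideanSpace ℝ (Fin n) →ₗ[ℝ] EuclideanSpace ℝ (Fin n)))
    (ω : (EuclideanSpace ℝ (Fin n)) [⋀^Fin k]→ₗ[ℝ] ℝ) :
    LinearMap.det (T : EuclideanSpace ℝ (Fin n) →ₗ[ℝ] EuclideanSpace ℝ (Fin n)) *
        altFormNorm ω ^ ((n : ℝ) / k) ≤
      K ^ (n - 1) * altFormNorm (ω.compLinearMap
        (T : EuclideanSpace ℝ (Fin n) →ₗ[ℝ] EuclideanSpace ℝ (Fin n))) ^ ((n : ℝ) / k) := by
  have hdet : 0 < LinearMap.det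
      (T : EuclideanSpace ℝ (Fin n) →ₗ[ℝ] EuclideanSpace ℝ (Fin n)) := by
    have h0 : LinearMap.det
        (T : EuclideanSpace ℝ (Fin n) →ₗ[ℝ] EuclideanSpace ℝ (Fin n)) ≠ 0 := by
      have := (LinearEquiv.ofBijective
        (T : EuclideanSpace ℝ (Fin n) →ₗ[ℝ] EuclideanSpace ℝ (Fin n)) hTinv).isUnit_det'
      exact this.ne_zero
    have h1 : 0 ≤ K * LinearMap.det
        (T : EuclideanSpace ℝ (Fin n) →ₗ[ℝ] EuclideanSpace ℝ (Fin n)) :=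
      le_trans (by positivity) hT
    exact lt_of_le_of_ne (nonneg_of_mul_nonneg_right h1 (by linarith)) h0.symm
  have hH := abs_det_le_aux n hn T
  rw [abs_of_pos hdet] at hH
  have hcomp := fun c hc h => altFormNorm_comp_aux (k := k) c hc T hTinv h ω
  have hA := altFormNorm_nonneg_aux ω
  have hB := altFormNorm_nonneg_aux (ω.compLinearMap
        (T : EuclideanSpace ℝ (Fin n) →ₗ[ℝ] EuclideanSpace ℝ (Fin n)))
  generalize altFormNorm (ω.compLinearMap
        (T : EuclideanSpace ℝ (Fin n) →ₗ[ℝ] EuclideanSpace ℝ (Fin n))) = B at *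
  generalize altFormNorm ω = A at *
  generalize LinearMap.det
      (T : EuclideanSpace ℝ (Fin n) →ₗ[ℝ] EuclideanSpace ℝ (Fin n)) = d at *
  have hTpos : 0 < ‖T‖ ^ (n - 1) := by
    have h := hH (EuclideanSpace.single ⟨0, hn⟩ 1) (by simp)
    by_contra hneg
    have : ‖T‖ ^ (n - 1) = 0 := le_antisymm (not_lt.1 hneg) (by positivity)
    rw [this] at h
    linarith
  set c := d / ‖T‖ ^ (n - 1) with hcdef
  have hc : 0 < c := div_pos hdet hTpos
  have hcd : c * ‖T‖ ^ (n - 1) = d := div_mul_cancel₀ _ hTpos.ne'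
  have hcT : ∀ u, c * ‖u‖ ≤ ‖T u‖ := by
    intro u
    by_cases hu : u = 0
    · simp [hu]
    have hun : 0 < ‖u‖ := norm_pos_iff.2 hu
    have h := hH (‖u‖⁻¹ • u) (by rw [norm_smul]; simp [hun.ne'])
    rw [map_smul, norm_smul, norm_inv, norm_norm, ← hcd] at h
    have h := le_of_mul_le_mul_right h hTpos
    rwa [inv_mul_eq_div, le_div_iff₀ hun] at h
  have hAB := hcomp c hc hcT
  have hdc : d ≤ K ^ (n - 1) * c ^ n := by
    have h1 : (‖T‖ ^ (n - 1)) ^ n ≤ K ^ (n - 1) * d ^ (n - 1) := by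
      rw [← pow_mul, mul_comm, pow_mul, ← mul_pow]
      exact pow_le_pow_left₀ (by positivity) hT _
    have h2 : d * d ^ (n - 1) ≤ (K ^ (n - 1) * c ^ n) * d ^ (n - 1) := by
      calc d * d ^ (n - 1) = d ^ n := by rw [← pow_succ', Nat.sub_add_cancel hn]
        _ = c ^ n * (‖T‖ ^ (n - 1)) ^ n := by rw [← mul_pow, hcd]
        _ ≤ c ^ n * (K ^ (n - 1) * d ^ (n - 1)) :=
          mul_le_mul_of_nonneg_left h1 (by positivity)
        _ = _ := by ring
    exact le_of_mul_le_mul_right h2 (by positivity)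
  have hkr : (k : ℝ) ≠ 0 := by positivity
  have h3 : c ^ n * A ^ ((n : ℝ) / k) ≤ B ^ ((n : ℝ) / k) := by
    have h4 := Real.rpow_le_rpow (by positivity) hAB (by positivity : (0 : ℝ) ≤ (n : ℝ) / k)
    rw [Real.mul_rpow (by positivity) hA, ← Real.rpow_natCast c k, ← Real.rpow_mul hc.le,
      mul_div_cancel₀ _ hkr, Real.rpow_natCast] at h4
    exact h4
  calc d * A ^ ((n : ℝ) / k) ≤ (K ^ (n - 1) * c ^ n) * A ^ ((n : ℝ) / k) :=
        mul_le_mul_of_nonneg_right hdc (by positivity)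
    _ = K ^ (n - 1) * (c ^ n * A ^ ((n : ℝ) / k)) := by ring
    _ ≤ _ := mul_le_mul_of_nonneg_left h3 (by positivity)
end
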